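/- arXiv:2304.13695 — 2 statements merged into one kernel-verified Lean document; each statement's English description precedes it below -/
import Mathlib

section
/- Let G be a finite simple graph, σ a linear order on V(G), and γ ≥ 1 an integer. Let 𝒱 be a collection of subsets of V(G) such that every V ∈ 𝒱 satisfies |V| ≤ γ and G[V] is connected, and let S be a hitting set of 𝒱. Let δ ≥ 1 be an integer and let X be a nonempty subset of V(G) that is the core of an r-sunflower in 𝒱 for some r ≥ δ. Then either S ∩ X ≠ ∅, or the σ-maximum vertex v* of X satisfies |{u ∈ S : v* ∈ WR_γ(G,σ,u)}| ≥ δ − wcol_γ(G,σ). -/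
/-- `WR_r(G, σ, v)`: the set of vertices `u` reachable from `v` by a walk of
length at most `r` on which every vertex is `≤ u` in the order `σ`. -/
def WR {α : Type} (G : SimpleGraph α) (σ : LinearOrder α) (r : ℕ) (v : α) : Set α :=
  {u | ∃ p : G.Walk v u, p.length ≤ r ∧ ∀ w ∈ p.support, σ.le w u}

/-- `wcol_r(G, σ)`: the weak `r`-coloring number of `G` under the order `σ`. -/
noncomputable def wcol {α : Type} [Fintype α] (G : SimpleGraph α)
    (σ : LinearOrder α) (r : ℕ) : ℕ :=
  Finset.univ.sup fun v => (WR G σ r v).ncard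

/-- `X` is the core of an `r`-sunflower in `𝒰`. -/
def IsSunflowerWithCore {α : Type} [DecidableEq α] (𝒰 : Set (Finset α)) (r : ℕ)
    (X : Finset α) : Prop :=
  ∃ 𝒮 : Finset (Finset α), ↑𝒮 ⊆ 𝒰 ∧ 𝒮.card = r ∧
    ∀ A ∈ 𝒮, ∀ B ∈ 𝒮, A ≠ B → A ∩ B = X

theorem aux_max {α : Type} (σ : LinearOrder α) (A : Finset α) (h : A.Nonempty) :
    ∃ m ∈ A, ∀ x ∈ A, σ.le x m :=
  Finset.exists_max_image A id h

theorem aux_WR {α : Type} (G : SimpleGraph α) (σ : LinearOrder α) (γ : ℕ) (A : Finset α)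
    (hc : A.card ≤ γ) (hconn : (G.induce (↑A : Set α)).Connected) (u m : α)
    (hu : u ∈ A) (hm : m ∈ A) (hmax : ∀ x ∈ A, σ.le x m) : m ∈ WR G σ γ u := by
  obtain ⟨p, hp⟩ := (hconn.preconnected ⟨u, hu⟩ ⟨m, hm⟩).exists_isPath
  have hl := hp.length_lt
  have hk : Fintype.card (↑(↑A : Set α)) = A.card := by simp
  rw [hk] at hl
  refine ⟨p.map (SimpleGraph.Embedding.induce (↑A : Set α)).toHom, ?_, ?_⟩
  · exact (SimpleGraph.Walk.length_map (SimpleGraph.Embedding.induce (↑A : Set α)).toHom p).trans_le (by omega)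
  · intro w hw
    have e := SimpleGraph.Walk.support_map (SimpleGraph.Embedding.induce (↑A : Set α)).toHom p
    replace hw := List.mem_map.1 (Eq.mp (congrArg (fun l => w ∈ l) e) hw)
    obtain ⟨x, -, rfl⟩ := hw
    exact hmax _ x.2

/-- let `𝒱` consist of subsets of `V(G)` of size at most `γ` inducing
connected subgraphs, let `S` be a hitting set of `𝒱`, let `δ ≥ 1`, and let `X` be
a nonempty core of an `r`-sunflower in `𝒱` with `r ≥ δ`.  Then either `S ∩ X ≠ ∅`,
or the `σ`-maximum vertex `v*` of `X` satisfies
`|{u ∈ S : v* ∈ WR_γ(G,σ,u)}| ≥ δ − wcol_γ(G,σ)`. -/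
theorem stmt8 {α : Type} [Fintype α] [DecidableEq α]
    (G : SimpleGraph α) (σ : LinearOrder α) (γ : ℕ) (hγ : 1 ≤ γ)
    (𝒱 : Set (Finset α))
    (hsize : ∀ V ∈ 𝒱, V.card ≤ γ)
    (hconn : ∀ V ∈ 𝒱, (G.induce (↑V : Set α)).Connected)
    (S : Finset α) (hS : ∀ V ∈ 𝒱, (S ∩ V).Nonempty)
    (δ : ℕ) (hδ : 1 ≤ δ)
    (X : Finset α) (hX : X.Nonempty)
    (r : ℕ) (hr : δ ≤ r) (hcore : IsSunflowerWithCore 𝒱 r X) :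
    (S ∩ X).Nonempty ∨
      ∀ v' ∈ X, (∀ x ∈ X, σ.le x v') →
        (δ : ℤ) - (wcol G σ γ : ℤ) ≤
          (({u ∈ (↑S : Set α) | v' ∈ WR G σ γ u}).ncard : ℤ) := by
  classical
  by_cases hSX : (S ∩ X).Nonempty
  · exact Or.inl hSX
  right
  intro v hv hvmax
  obtain ⟨𝒮, hsub, hcard, hsun⟩ := hcore
  have hw : ∀ x, (WR G σ γ x).ncard ≤ wcol G σ γ := fun x =>
    Finset.le_sup (f := fun v => (WR G σ γ v).ncard) (Finset.mem_univ x)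
  by_cases hr1 : r ≤ 1
  · have h1 : 0 < (WR G σ γ v).ncard := by
      rw [Set.ncard_pos (Set.toFinite _)]
      exact ⟨v, SimpleGraph.Walk.nil, by simp, by simp [σ.le_refl]⟩
    have := hw v
    omega
  have hXA : ∀ A ∈ 𝒮, X ⊆ A := by
    intro A hA
    obtain ⟨B, hB, hne⟩ := Finset.exists_mem_ne (by omega : 1 < 𝒮.card) A
    rw [← hsun A hA B hB hne.symm]
    exact Finset.inter_subset_left
  have hmx : ∀ A : Finset α, ∃ m, A ∈ 𝒮 → m ∈ A ∧ ∀ x ∈ A, σ.le x m := by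
    intro A
    by_cases hA : A ∈ 𝒮
    · obtain ⟨m, h1, h2⟩ := aux_max σ A ⟨v, hXA A hA hv⟩
      exact ⟨m, fun _ => ⟨h1, h2⟩⟩
    · exact ⟨v, fun h => absurd h hA⟩
  choose m hm using hmx
  have hux : ∀ A : Finset α, ∃ u, A ∈ 𝒮 → u ∈ S ∧ u ∈ A := by
    intro A
    by_cases hA : A ∈ 𝒮
    · obtain ⟨u, h1⟩ := hS A (hsub hA)
      exact ⟨u, fun _ => Finset.mem_inter.1 h1⟩
    · exact ⟨v, fun h => absurd h hA⟩
  choose u hu using hux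
  have key : ∀ A ∈ 𝒮, ∀ B ∈ 𝒮, ∀ x, x ∈ A → x ∈ B → x ∉ X → A = B := by
    intro A hA B hB x hxA hxB hx
    by_contra hne
    exact hx (hsun A hA B hB hne ▸ Finset.mem_inter.2 ⟨hxA, hxB⟩)
  have c1 : (𝒮.filter (fun A => m A = v)).card ≤
      ({u ∈ (↑S : Set α) | v ∈ WR G σ γ u}).ncard := by
    rw [← Set.ncard_coe_finset]
    refine Set.ncard_le_ncard_of_injOn u ?_ ?_ (Set.toFinite _)
    · intro A hA
      obtain ⟨hA, hmv⟩ := Finset.mem_filter.1 hA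
      refine ⟨(hu A hA).1, aux_WR G σ γ A (hsize A (hsub hA)) (hconn A (hsub hA)) _ _
        (hu A hA).2 (hXA A hA hv) ?_⟩
      rw [← hmv]
      exact (hm A hA).2
    · intro A hA B hB hAB
      have hA := (Finset.mem_filter.1 hA).1
      have hB := (Finset.mem_filter.1 hB).1
      refine key A hA B hB (u A) (hu A hA).2 (hAB ▸ (hu B hB).2) fun h => hSX ?_
      exact ⟨u A, Finset.mem_inter.2 ⟨(hu A hA).1, h⟩⟩
  have c2 : (𝒮.filter (fun A => ¬ m A = v)).card ≤ (WR G σ γ v).ncard := by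
    rw [← Set.ncard_coe_finset]
    refine Set.ncard_le_ncard_of_injOn m ?_ ?_ (Set.toFinite _)
    · intro A hA
      obtain ⟨hA, hmv⟩ := Finset.mem_filter.1 hA
      exact aux_WR G σ γ A (hsize A (hsub hA)) (hconn A (hsub hA)) _ _
        (hXA A hA hv) (hm A hA).1 (hm A hA).2
    · intro A hA B hB hAB
      obtain ⟨hA, hmv⟩ := Finset.mem_filter.1 hA
      have hB := (Finset.mem_filter.1 hB).1
      refine key A hA B hB (m A) (hm A hA).1 (hAB ▸ (hm B hB).1) fun h => hmv ?_
      exact σ.le_antisymm _ _ (hvmax _ h) ((hm A hA).2 v (hXA A hA hv))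
  have := Finset.card_filter_add_card_filter_not (s := 𝒮) (fun A => m A = v)
  have := hw v
  omega
end

section
/- Let γ ≥ 2 and δ ≥ 1 be integers and let 𝒱 be a collection of subsets of a finite set U, each of size at most γ. Let Γ be the collection of all nonempty sets X ⊆ U that are the core of a (δ·γ^{|X|})-sunflower in 𝒱. Let 𝒲 ⊆ 𝒱 be a subcollection none of whose members contains a member of Γ as a subset. If 𝒲 contains at least (δ·γ^γ)^γ·γ! distinct sets, then 𝒲 contains δ·γ^γ pairwise disjoint sets. -/
/-- `Γ`: the collection of all nonempty sets `X` that are the core of a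
`(δ·γ^{|X|})`-sunflower in `𝒱`. -/
def GammaColl {α : Type} [DecidableEq α] (𝒱 : Set (Finset α)) (γ δ : ℕ) :
    Set (Finset α) :=
  {X | X.Nonempty ∧ IsSunflowerWithCore 𝒱 (δ * γ ^ X.card) X}

theorem sunflower_aux {α : Type} [DecidableEq α] (m : ℕ) (hm : 1 ≤ m) (k : ℕ) :
    ∀ F : Finset (Finset α), (∀ A ∈ F, A.card ≤ k) → m ^ k * Nat.factorial k < F.card →
    ∃ S : Finset (Finset α), S ⊆ F ∧ S.card = m + 1 ∧
      ∃ X, ∀ A ∈ S, ∀ B ∈ S, A ≠ B → A ∩ B = X := by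
  induction k with
  | zero =>
    intro F hF hc
    exfalso
    have : F ⊆ {∅} := by
      intro A hA
      have := hF A hA
      simpa using this
    have := Finset.card_le_card this
    simp at hc this
    omega
  | succ k ih =>
    intro F hF hc
    classical
    let P := F.powerset.filter (fun D => ∀ A ∈ D, ∀ B ∈ D, A ≠ B → Disjoint A B)
    have hP : P.Nonempty := ⟨∅, by simp [P]⟩
    obtain ⟨D, hDP, hDmax⟩ := Finset.exists_max_image P Finset.card hP
    simp only [P, Finset.mem_filter, Finset.mem_powerset] at hDP hDmax
    obtain ⟨hDF, hDd⟩ := hDP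
    by_cases hDc : m + 1 ≤ D.card
    · obtain ⟨S, hSD, hS⟩ := Finset.exists_subset_card_eq hDc
      refine ⟨S, hSD.trans hDF, hS, ∅, fun A hA B hB hAB => ?_⟩
      exact Finset.disjoint_iff_inter_eq_empty.1 (hDd A (hSD hA) B (hSD hB) hAB)
    have hex : ∃ y, m ^ k * Nat.factorial k < (F.filter (fun B => y ∈ B)).card := by
      by_contra! hno
      have h1 : F ⊆ D.biUnion (fun A => F.filter (fun B => B = A ∨ ¬ Disjoint A B)) := by
        intro B hB
        by_contra hcon
        simp only [Finset.mem_biUnion, Finset.mem_filter, not_exists, not_and, not_or,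
          not_not] at hcon
        have hBD : B ∉ D := fun h => (hcon B h hB).1 rfl
        have := hDmax (insert B D) ⟨Finset.insert_subset hB hDF, by
          intro A hA C hC hAC
          rcases Finset.mem_insert.1 hA with rfl | hA1 <;>
            rcases Finset.mem_insert.1 hC with rfl | hC1
          · exact absurd rfl hAC
          · exact (hcon C hC1 hB).2.symm
          · exact (hcon A hA1 hB).2
          · exact hDd A hA1 C hC1 hAC⟩
        rw [Finset.card_insert_of_notMem hBD] at this
        omega
      have hpos : 1 ≤ (k + 1) * (m ^ k * Nat.factorial k) := Nat.one_le_iff_ne_zero.2 (by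
        have := Nat.factorial_ne_zero k
        have : m ≠ 0 := by omega
        positivity)
      have h2 := (Finset.card_le_card h1).trans
        (Finset.card_biUnion_le_card_mul _ _ ((k + 1) * (m ^ k * Nat.factorial k)) (by
          intro A hA
          rcases Finset.eq_empty_or_nonempty A with rfl | hne
          · refine le_trans (Finset.card_le_card (t := {∅}) ?_) (by simpa using hpos)
            intro B hB
            simpa using (Finset.mem_filter.1 hB).2
          · have h3 : F.filter (fun B => B = A ∨ ¬ Disjoint A B) ⊆
                A.biUnion (fun y => F.filter (fun B => y ∈ B)) := by
              intro B hB
              obtain ⟨hBF, hB⟩ := Finset.mem_filter.1 hB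
              simp only [Finset.mem_biUnion, Finset.mem_filter]
              rcases hB with rfl | hB
              · obtain ⟨y, hy⟩ := hne
                exact ⟨y, hy, hBF, hy⟩
              · obtain ⟨y, hy, hy'⟩ := Finset.not_disjoint_iff.1 hB
                exact ⟨y, hy, hBF, hy'⟩
            exact (Finset.card_le_card h3).trans
              ((Finset.card_biUnion_le_card_mul _ _ _ (fun y _ => hno y)).trans
                (Nat.mul_le_mul_right _ (hF A (hDF hA))))))
      have h4 : D.card * ((k + 1) * (m ^ k * Nat.factorial k)) ≤
          m * ((k + 1) * (m ^ k * Nat.factorial k)) := Nat.mul_le_mul_right _ (by omega)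
      have h5 : m * ((k + 1) * (m ^ k * Nat.factorial k)) =
          m ^ (k + 1) * Nat.factorial (k + 1) := by
        rw [Nat.factorial_succ]; ring
      omega
    obtain ⟨y, hy⟩ := hex
    have hinj : Set.InjOn (fun B : Finset α => B.erase y) (F.filter (fun B => y ∈ B)) := by
      intro A hA B hB hAB
      have hA' := (Finset.mem_filter.1 (Finset.mem_coe.1 hA)).2
      have hB' := (Finset.mem_filter.1 (Finset.mem_coe.1 hB)).2
      have hAB : A.erase y = B.erase y := hAB
      rw [← Finset.insert_erase hA', hAB, Finset.insert_erase hB']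
    obtain ⟨S, hS, hSc, X, hX⟩ := ih ((F.filter (fun B => y ∈ B)).image (fun B => B.erase y)) (by
        intro A hA
        obtain ⟨B, hB, rfl⟩ := Finset.mem_image.1 hA
        obtain ⟨hBF, hyB⟩ := Finset.mem_filter.1 hB
        have := hF B hBF
        rw [Finset.card_erase_of_mem hyB]
        omega) (by rwa [Finset.card_image_of_injOn hinj])
    have hSy : ∀ A ∈ S, y ∉ A ∧ insert y A ∈ F := by
      intro A hA
      obtain ⟨B, hB, rfl⟩ := Finset.mem_image.1 (hS hA)
      obtain ⟨hBF, hyB⟩ := Finset.mem_filter.1 hB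
      exact ⟨by simp, by rwa [Finset.insert_erase hyB]⟩
    refine ⟨S.image (insert y), ?_, ?_, insert y X, ?_⟩
    · intro A hA
      obtain ⟨B, hB, rfl⟩ := Finset.mem_image.1 hA
      exact (hSy B hB).2
    · rw [Finset.card_image_of_injOn, hSc]
      intro A hA B hB hAB
      have hAB : insert y A = insert y B := hAB
      rw [← Finset.erase_insert (hSy A hA).1, hAB, Finset.erase_insert (hSy B hB).1]
    · intro A hA B hB hAB
      obtain ⟨A, hA1, rfl⟩ := Finset.mem_image.1 hA
      obtain ⟨B, hB1, rfl⟩ := Finset.mem_image.1 hB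
      rw [← Finset.insert_inter_distrib, hX A hA1 B hB1 (fun h => hAB (by rw [h]))]

/-- let `γ ≥ 2`, `δ ≥ 1`, let `𝒱` consist of sets of size at most
`γ`, and let `𝒲 ⊆ 𝒱` be a subcollection none of whose members contains a member
of `Γ`.  If `𝒲` has at least `(δ·γ^γ)^γ·γ!` members, then `𝒲` contains
`δ·γ^γ` pairwise disjoint sets. -/
theorem stmt13 {α : Type} [Fintype α] [DecidableEq α]
    (γ δ : ℕ) (hγ : 2 ≤ γ) (hδ : 1 ≤ δ)
    (𝒱 : Set (Finset α)) (hsize : ∀ V ∈ 𝒱, V.card ≤ γ)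
    (𝒲 : Set (Finset α)) (h𝒲 : 𝒲 ⊆ 𝒱)
    (hout : ∀ W ∈ 𝒲, ∀ X ∈ GammaColl 𝒱 γ δ, ¬ X ⊆ W)
    (hbig : (δ * γ ^ γ) ^ γ * Nat.factorial γ ≤ 𝒲.ncard) :
    ∃ 𝒟 : Finset (Finset α), ↑𝒟 ⊆ 𝒲 ∧ 𝒟.card = δ * γ ^ γ ∧
      ∀ A ∈ 𝒟, ∀ B ∈ 𝒟, A ≠ B → Disjoint A B := by
  classical
  have hr : 2 ≤ δ * γ ^ γ := by
    calc 2 ≤ γ ^ 1 := by simpa using hγ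
      _ ≤ γ ^ γ := Nat.pow_le_pow_right (by omega) (by omega)
      _ ≤ δ * γ ^ γ := Nat.le_mul_of_pos_left _ hδ
  obtain ⟨m, hm⟩ : ∃ m, δ * γ ^ γ = m + 1 := ⟨δ * γ ^ γ - 1, by omega⟩
  have hfin : 𝒲.Finite := Set.toFinite _
  rw [Set.ncard_eq_toFinset_card _ hfin] at hbig
  have hlt : m ^ γ * Nat.factorial γ < hfin.toFinset.card := by
    refine lt_of_lt_of_le ?_ hbig
    rw [hm]
    exact Nat.mul_lt_mul_of_pos_right (Nat.pow_lt_pow_left (by omega) (by omega))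
      (Nat.factorial_pos γ)
  obtain ⟨S, hS, hSc, X, hX⟩ := sunflower_aux m (by omega) γ hfin.toFinset
    (fun A hA => hsize A (h𝒲 (hfin.mem_toFinset.1 hA))) hlt
  have hSW : ∀ A ∈ S, A ∈ 𝒲 := fun A hA => hfin.mem_toFinset.1 (hS hA)
  refine ⟨S, hSW, by omega, fun A hA B hB hAB => ?_⟩
  have hAX := hX A hA B hB hAB
  rw [Finset.disjoint_iff_inter_eq_empty, hAX]
  by_contra hne
  have hXA : X ⊆ A := hAX ▸ Finset.inter_subset_left
  have hXc : X.card ≤ γ := (Finset.card_le_card hXA).trans (hsize A (h𝒲 (hSW A hA)))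
  have hle : δ * γ ^ X.card ≤ S.card := by
    rw [hSc, ← hm]
    exact Nat.mul_le_mul_left _ (Nat.pow_le_pow_right (by omega) hXc)
  obtain ⟨T, hTS, hT⟩ := Finset.exists_subset_card_eq hle
  exact hout A (hSW A hA) X ⟨Finset.nonempty_iff_ne_empty.2 hne, T,
    fun C hC => h𝒲 (hSW C (hTS hC)), hT,
    fun C hC D hD h => hX C (hTS hC) D (hTS hD) h⟩ hXA
end
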